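/- Let n ≥ 1, α > 0, ν > 0, and let v₀ ∈ H¹(ℝⁿ). Let v(t) be the solution of the linear Navier–Stokes–Voigt equation with datum v₀, i.e. v̂(ξ,t) = e^{tM(ξ)} v̂₀(ξ) with M(ξ) = −ν|ξ|²/(1+α²|ξ|²). Suppose the decay character of v₀ is r* = −n/2, i.e. for every r ∈ (−n/2, ∞), ρ^{−2r−n} ∫_{|ξ|≤ρ} |v̂₀(ξ)|² dξ → ∞ as ρ → 0⁺. Then for every ε > 0 there exists C = C(ε) > 0 such that for all t > 0, ‖v(t)‖²_{L²} + α²‖∇v(t)‖²_{L²} ≥ C (1+t)^{−ε}; that is, the decay of v is slower than any algebraic rate. -/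

import Mathlib

open MeasureTheory Filter Topology Metric

/-!
The multiplier `e^{2tM}` dominates `e^{-2νt|ξ|²}`, so on the ball `|ξ| ≤ ρ` with `tρ² ≤ 1` it is at
least `e^{-2ν}`. Hence the energy at time `t` controls the mass of `|v̂₀|²` in a ball of radius
comparable to `(1 + t)^{-1/2}`, and a lower bound `ρ^{2s}` for that mass as `ρ → 0⁺` becomes the
lower bound `(1 + t)^{-s}` for the energy. When `r* = -n/2`, every `s > 0` is admissible.
-/

section RpowAsymptotics

variable {m : ℝ → ℝ}

lemma rpow_neg_isBigO_of_tendsto_rpow_mul_atTop {a : ℝ}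
    (h : Tendsto (fun ρ : ℝ => ρ ^ a * m ρ) (𝓝[>] 0) atTop) :
    (fun ρ : ℝ => ρ ^ (-a)) =O[𝓝[>] 0] m := by
  refine .of_bound 1 ?_
  filter_upwards [h.eventually_ge_atTop 1, self_mem_nhdsWithin] with ρ hm hρ
  have hρa : 0 < ρ ^ a := Real.rpow_pos_of_pos hρ a
  calc ‖ρ ^ (-a)‖ = (ρ ^ a)⁻¹ := by
        rw [Real.rpow_neg (le_of_lt hρ), Real.norm_of_nonneg (inv_nonneg.2 hρa.le)]
    _ ≤ m ρ := (inv_le_iff_one_le_mul₀' hρa).2 hm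
    _ ≤ 1 * ‖m ρ‖ := by rw [one_mul]; exact Real.le_norm_self _

lemma rpow_two_mul_isBigO_of_decayIndicator_tendsto_atTop {n s : ℝ}
    (h : ∀ r : ℝ, -n / 2 < r →
      Tendsto (fun ρ : ℝ => ρ ^ (-(2 * r) - n) * m ρ) (𝓝[>] 0) atTop) (hs : 0 < s) :
    (fun ρ : ℝ => ρ ^ (2 * s)) =O[𝓝[>] 0] m := by
  have hm := rpow_neg_isBigO_of_tendsto_rpow_mul_atTop (h (-n / 2 + s) (by linarith))
  rwa [show -(-(2 * (-n / 2 + s)) - n) = 2 * s by ring] at hm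

lemma exists_mul_sq_le_one_and_rpow_le_of_isBigO {s : ℝ} (hm : ∀ ρ, 0 ≤ m ρ)
    (h : (fun ρ : ℝ => ρ ^ (2 * s)) =O[𝓝[>] 0] m) :
    ∃ C > 0, ∀ t : ℝ, 0 ≤ t → ∃ ρ, t * ρ ^ 2 ≤ 1 ∧ C * (1 + t) ^ (-s) ≤ m ρ := by
  obtain ⟨K, hK, hbound⟩ := h.exists_pos
  obtain ⟨d, hd, hsub⟩ := mem_nhdsGT_iff_exists_Ioc_subset.1
    (hbound.bound.and (Ioc_mem_nhdsGT one_pos))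
  have hd : 0 < d := hd
  have hd_le_one : d ≤ 1 := (hsub ⟨hd, le_rfl⟩).2.2
  refine ⟨K⁻¹ * d ^ (2 * s), by positivity, fun t ht => ?_⟩
  have h1t : 0 < 1 + t := by linarith
  -- The parabolic scale: `ρ² (1 + t) = d²`.
  set ρ := d * (1 + t) ^ (-(1 / 2) : ℝ) with hρ
  have hρ_pos : 0 < ρ := by positivity
  have hρ_rpow (q : ℝ) : ρ ^ (2 * q) = d ^ (2 * q) * (1 + t) ^ (-q) := by
    rw [hρ, Real.mul_rpow hd.le (by positivity), ← Real.rpow_mul h1t.le]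
    ring_nf
  have hρ_le : ρ ≤ d :=
    mul_le_of_le_one_right hd.le
      (Real.rpow_le_one_of_one_le_of_nonpos (by linarith) (by norm_num))
  have hρ_sq : ρ ^ 2 * (1 + t) = d ^ 2 := by
    have hρ_two := hρ_rpow 1
    rw [mul_one, Real.rpow_two, Real.rpow_two, Real.rpow_neg_one] at hρ_two
    rw [hρ_two, inv_mul_cancel_right₀ h1t.ne']
  refine ⟨ρ, by nlinarith, ?_⟩
  have hK_le : ‖ρ ^ (2 * s)‖ ≤ K * ‖m ρ‖ := (hsub ⟨hρ_pos, hρ_le⟩).1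
  rw [Real.norm_of_nonneg (by positivity), Real.norm_of_nonneg (hm ρ)] at hK_le
  rwa [mul_assoc, ← hρ_rpow, inv_mul_le_iff₀ hK]

end RpowAsymptotics

lemma integrable_mul_of_norm_le_mul {X : Type*} [MeasurableSpace X] {μ : Measure X}
    {w φ g : X → ℝ} {K : ℝ} (hwg : Integrable (fun x => w x * g x) μ)
    (hw : AEStronglyMeasurable w μ) (hw_pos : ∀ x, 0 < w x)
    (hφ : AEStronglyMeasurable φ μ) (hφw : ∀ x, ‖φ x‖ ≤ K * w x) :
    Integrable (fun x => φ x * g x) μ := by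
  have hquot : Integrable (fun x => φ x / w x * (w x * g x)) μ := by
    refine hwg.bdd_mul (c := K) (hφ.div₀ hw) (.of_forall fun x => ?_)
    rw [norm_div, Real.norm_of_nonneg (hw_pos x).le]
    exact (div_le_iff₀ (hw_pos x)).2 (hφw x)
  refine hquot.congr (.of_forall fun x => ?_)
  simp only [← mul_assoc, div_mul_cancel₀ _ (hw_pos x).ne']

section Voigt

variable {E G : Type*} [SeminormedAddCommGroup E] [SeminormedAddCommGroup G]

/-- The weight `1 + α²|ξ|²` which turns the squared `L²` norm into the squared `H¹_α` norm on the
Fourier side. -/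
noncomputable def voigtWeight (α : ℝ) (ξ : E) : ℝ :=
  1 + α ^ 2 * ‖ξ‖ ^ 2

/-- The Fourier symbol `M(ξ) = -ν|ξ|² / (1 + α²|ξ|²)` of the linear Navier–Stokes–Voigt
evolution. -/
noncomputable def voigtSymbol (α ν : ℝ) (ξ : E) : ℝ :=
  -(ν * ‖ξ‖ ^ 2) / voigtWeight α ξ

/-- The squared `H¹_α` norm at time `t` of the solution with Fourier datum `F`, written on the
Fourier side. The frequency space carries an arbitrary measure, and `α = 0` is the heat equation. -/
noncomputable def voigtEnergy [MeasurableSpace E] (μ : Measure E) (α ν : ℝ) (F : E → G)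
    (t : ℝ) : ℝ :=
  ∫ ξ, voigtWeight α ξ * (Real.exp (2 * t * voigtSymbol α ν ξ) * ‖F ξ‖ ^ 2) ∂μ

/-- The mass of `|F|²` at frequencies `|ξ| ≤ ρ`, whose vanishing order as `ρ → 0⁺` defines the decay
character. -/
noncomputable def lowFrequencyMass [MeasurableSpace E] (μ : Measure E) (F : E → G) (ρ : ℝ) : ℝ :=
  ∫ ξ in closedBall 0 ρ, ‖F ξ‖ ^ 2 ∂μ

variable {α ν t : ℝ}

lemma one_le_voigtWeight (α : ℝ) (ξ : E) : 1 ≤ voigtWeight α ξ :=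
  le_add_of_nonneg_right (by positivity)

lemma voigtWeight_pos (α : ℝ) (ξ : E) : 0 < voigtWeight α ξ :=
  one_pos.trans_le (one_le_voigtWeight α ξ)

lemma continuous_voigtWeight (α : ℝ) : Continuous (voigtWeight α : E → ℝ) := by
  unfold voigtWeight
  fun_prop

lemma continuous_voigtSymbol (α ν : ℝ) : Continuous (voigtSymbol α ν : E → ℝ) :=
  .div (by fun_prop) (continuous_voigtWeight α) fun ξ => (voigtWeight_pos α ξ).ne'

lemma voigtSymbol_nonpos (hν : 0 ≤ ν) (ξ : E) : voigtSymbol α ν ξ ≤ 0 :=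
  div_nonpos_of_nonpos_of_nonneg (neg_nonpos.2 (by positivity)) (voigtWeight_pos α ξ).le

lemma neg_mul_norm_sq_le_voigtSymbol (hν : 0 ≤ ν) (ξ : E) :
    -(ν * ‖ξ‖ ^ 2) ≤ voigtSymbol α ν ξ := by
  rw [voigtSymbol, neg_div, neg_le_neg_iff]
  exact div_le_self (by positivity) (one_le_voigtWeight α ξ)

lemma exp_neg_le_exp_voigtSymbol {ρ : ℝ} (hν : 0 ≤ ν) (ht : 0 ≤ t) {ξ : E}
    (hξ : ‖ξ‖ ≤ ρ) :
    Real.exp (-(2 * ν * (t * ρ ^ 2))) ≤ Real.exp (2 * t * voigtSymbol α ν ξ) := by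
  refine Real.exp_le_exp.2 ?_
  calc -(2 * ν * (t * ρ ^ 2)) = 2 * t * -(ν * ρ ^ 2) := by ring
    _ ≤ 2 * t * -(ν * ‖ξ‖ ^ 2) := by gcongr
    _ ≤ 2 * t * voigtSymbol α ν ξ := by
        gcongr
        exact neg_mul_norm_sq_le_voigtSymbol hν ξ

variable [MeasurableSpace E] {μ : Measure E} {F : E → G}

lemma lowFrequencyMass_nonneg (μ : Measure E) (F : E → G) (ρ : ℝ) :
    0 ≤ lowFrequencyMass μ F ρ :=
  integral_nonneg fun ξ => sq_nonneg ‖F ξ‖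

variable [OpensMeasurableSpace E]

lemma integrable_voigtWeight_mul_of_one_add_norm_sq_mul {g : E → ℝ}
    (hg : Integrable (fun ξ => (1 + ‖ξ‖ ^ 2) * g ξ) μ) (α : ℝ) :
    Integrable (fun ξ => voigtWeight α ξ * g ξ) μ := by
  refine integrable_mul_of_norm_le_mul (K := 1 + α ^ 2) hg (by fun_prop)
    (fun ξ => by positivity) (continuous_voigtWeight α).aestronglyMeasurable fun ξ => ?_
  rw [Real.norm_of_nonneg (voigtWeight_pos α ξ).le, voigtWeight]
  nlinarith [sq_nonneg ‖ξ‖, sq_nonneg α]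

lemma integrable_of_voigtWeight_mul {g : E → ℝ}
    (hg : Integrable (fun ξ => voigtWeight α ξ * g ξ) μ) : Integrable g μ := by
  have h : Integrable (fun ξ => 1 * g ξ) μ :=
    integrable_mul_of_norm_le_mul (K := 1) hg
      (continuous_voigtWeight α).aestronglyMeasurable (voigtWeight_pos α)
      aestronglyMeasurable_const fun ξ => by
        rw [norm_one, one_mul]; exact one_le_voigtWeight α ξ
  simpa only [one_mul] using h

lemma integrable_voigtWeight_mul_exp_mul {g : E → ℝ} (hν : 0 ≤ ν) (ht : 0 ≤ t)
    (hg : Integrable (fun ξ => voigtWeight α ξ * g ξ) μ) :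
    Integrable (fun ξ =>
      voigtWeight α ξ * (Real.exp (2 * t * voigtSymbol α ν ξ) * g ξ)) μ := by
  have hexp : Continuous fun ξ : E => Real.exp (2 * t * voigtSymbol α ν ξ) :=
    ((continuous_voigtSymbol α ν).const_mul _).rexp
  simp only [mul_left_comm _ (Real.exp _)]
  refine hg.bdd_mul (c := 1) hexp.aestronglyMeasurable (.of_forall fun ξ => ?_)
  rw [Real.norm_of_nonneg (Real.exp_pos _).le, Real.exp_le_one_iff]
  exact mul_nonpos_of_nonneg_of_nonpos (by positivity) (voigtSymbol_nonpos hν ξ)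

lemma exp_mul_lowFrequencyMass_le_voigtEnergy (hν : 0 ≤ ν) (ht : 0 ≤ t)
    (hF : Integrable (fun ξ => voigtWeight α ξ * ‖F ξ‖ ^ 2) μ) (ρ : ℝ) :
    Real.exp (-(2 * ν * (t * ρ ^ 2))) * lowFrequencyMass μ F ρ ≤ voigtEnergy μ α ν F t := by
  have henergy := integrable_voigtWeight_mul_exp_mul hν ht hF
  have hmass := (integrable_of_voigtWeight_mul hF).const_mul (Real.exp (-(2 * ν * (t * ρ ^ 2))))
  rw [lowFrequencyMass, ← integral_const_mul]
  calc ∫ ξ in closedBall 0 ρ, Real.exp (-(2 * ν * (t * ρ ^ 2))) * ‖F ξ‖ ^ 2 ∂μ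
      ≤ ∫ ξ in closedBall 0 ρ,
          voigtWeight α ξ * (Real.exp (2 * t * voigtSymbol α ν ξ) * ‖F ξ‖ ^ 2) ∂μ := by
        refine setIntegral_mono_on hmass.integrableOn henergy.integrableOn
          measurableSet_closedBall fun ξ hξ => ?_
        have hexp := exp_neg_le_exp_voigtSymbol (α := α) hν ht (mem_closedBall_zero_iff.1 hξ)
        exact (mul_le_mul_of_nonneg_right hexp (by positivity)).trans
          (le_mul_of_one_le_left (by positivity) (one_le_voigtWeight α ξ))
    _ ≤ voigtEnergy μ α ν F t :=
        setIntegral_le_integral henergy (.of_forall fun ξ =>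
          mul_nonneg (voigtWeight_pos α ξ).le (by positivity))

theorem linear_NSV_slow_decay_general {s : ℝ} (hν : 0 ≤ ν)
    (hF : Integrable (fun ξ => voigtWeight α ξ * ‖F ξ‖ ^ 2) μ)
    (hmass : (fun ρ : ℝ => ρ ^ (2 * s)) =O[𝓝[>] 0] lowFrequencyMass μ F) :
    ∃ C > 0, ∀ t : ℝ, 0 ≤ t → C * (1 + t) ^ (-s) ≤ voigtEnergy μ α ν F t := by
  obtain ⟨C, hC, hscale⟩ :=
    exists_mul_sq_le_one_and_rpow_le_of_isBigO (lowFrequencyMass_nonneg μ F) hmass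
  refine ⟨Real.exp (-(2 * ν)) * C, by positivity, fun t ht => ?_⟩
  obtain ⟨ρ, htρ, hρ⟩ := hscale t ht
  have hνρ : 2 * ν * (t * ρ ^ 2) ≤ 2 * ν := mul_le_of_le_one_right (by positivity) htρ
  calc Real.exp (-(2 * ν)) * C * (1 + t) ^ (-s)
      = Real.exp (-(2 * ν)) * (C * (1 + t) ^ (-s)) := mul_assoc ..
    _ ≤ Real.exp (-(2 * ν * (t * ρ ^ 2))) * lowFrequencyMass μ F ρ := by gcongr
    _ ≤ voigtEnergy μ α ν F t := exp_mul_lowFrequencyMass_le_voigtEnergy hν ht hF ρ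

end Voigt

/-- **Slow decay for the linear Navier–Stokes–Voigt equation when `r* = -n/2`.**
If for every `r ∈ (-n/2, ∞)` the decay indicator `ρ^{-2r-n} ∫_{|ξ|≤ρ} |v̂₀|² → ∞` as
`ρ → 0⁺`, then for every `ε > 0` there is `C > 0` with
`‖v(t)‖²_{L²} + α²‖∇v(t)‖²_{L²} ≥ C (1+t)^{-ε}` for all `t > 0`, where
`v̂(ξ,t) = e^{tM(ξ)} v̂₀(ξ)`, `M(ξ) = -ν|ξ|²/(1+α²|ξ|²)`, and by Plancherel
`‖v(t)‖²_{L²} + α²‖∇v(t)‖²_{L²} = ∫ (1+α²|ξ|²) e^{2tM(ξ)} |v̂₀(ξ)|² dξ`. -/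
theorem linear_NSV_slow_decay
    (n : ℕ) (hn : 1 ≤ n) (α ν : ℝ) (hα : 0 < α) (hν : 0 < ν)
    (F0 : EuclideanSpace ℝ (Fin n) → ℂ)
    (hH1 : Integrable (fun ξ : EuclideanSpace ℝ (Fin n) => (1 + ‖ξ‖ ^ 2) * ‖F0 ξ‖ ^ 2))
    (hchar : ∀ r : ℝ, -(n : ℝ) / 2 < r →
      Tendsto (fun ρ : ℝ => ρ ^ (-(2 * r) - (n : ℝ)) *
        ∫ ξ in closedBall (0 : EuclideanSpace ℝ (Fin n)) ρ, ‖F0 ξ‖ ^ 2)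
        (𝓝[>] (0:ℝ)) atTop) :
    ∀ ε > (0:ℝ), ∃ C > (0:ℝ), ∀ t > (0:ℝ),
      C * (1 + t) ^ (-ε) ≤
        ∫ ξ : EuclideanSpace ℝ (Fin n),
          (1 + α ^ 2 * ‖ξ‖ ^ 2) *
            (Real.exp (2 * t * (-(ν * ‖ξ‖ ^ 2) / (1 + α ^ 2 * ‖ξ‖ ^ 2))) * ‖F0 ξ‖ ^ 2) := by
  intro ε hε
  obtain ⟨C, hC, hdecay⟩ := linear_NSV_slow_decay_general hν.le
    (integrable_voigtWeight_mul_of_one_add_norm_sq_mul hH1 α)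
    (rpow_two_mul_isBigO_of_decayIndicator_tendsto_atTop hchar hε)
  exact ⟨C, hC, fun t ht => hdecay t ht.le⟩
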